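/- arXiv:2605.19388 — 2 statements merged into one kernel-verified Lean document; each statement's English description precedes it below -/
import Mathlib

section
/- Let I, J, M, K, N be nonempty finite index sets. Let y_{ijm} ∈ ℂ with y_{ijm} ≠ 0 for all (i,j,m) ∈ I×J×M, and let t_{ikn} > 0, v_{kjn} > 0, λ_{inm} > 0 be strictly positive reals for all relevant indices. Define η_{ijm}(v) = Σ_{k,n} t_{ikn} v_{kjn} λ_{inm} and the cost f(v) = Σ_{i,j,m} (|y_{ijm}|² / η_{ijm}(v) + ln η_{ijm}(v)). Define the multiplicative update v'_{kjn} = v_{kjn} · sqrt( (Σ_{i,m} t_{ikn} λ_{inm} |y_{ijm}|² η_{ijm}(v)^{−2}) / (Σ_{i,m} t_{ikn} λ_{inm} η_{ijm}(v)^{−1}) ) applied simultaneously for all (k,j,n). Then v'_{kjn} > 0 for all (k,j,n) and f(v') ≤ f(v). -/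
/-- `η i j m = ∑ k, ∑ n, t i k n * v k j n * λ i n m`. -/
def fmEta {I J M K N : Type*} [Fintype K] [Fintype N]
    (t : I → K → N → ℝ) (v : K → J → N → ℝ) (lam : I → N → M → ℝ)
    (i : I) (j : J) (m : M) : ℝ :=
  ∑ k, ∑ n, t i k n * v k j n * lam i n m

/-- FastMNMF cost `f = ∑ i j m, (|y i j m|² / η i j m + ln (η i j m))`. -/
noncomputable def fmCost {I J M K N : Type*}
    [Fintype I] [Fintype J] [Fintype M] [Fintype K] [Fintype N]
    (y : I → J → M → ℂ) (t : I → K → N → ℝ) (v : K → J → N → ℝ)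
    (lam : I → N → M → ℝ) : ℝ :=
  ∑ i, ∑ j, ∑ m,
    (‖y i j m‖ ^ 2 / fmEta t v lam i j m + Real.log (fmEta t v lam i j m))

/-- The multiplicative MM update of the temporal activations `v`. -/
noncomputable def fmVUpdate {I J M K N : Type*}
    [Fintype I] [Fintype M] [Fintype K] [Fintype N]
    (y : I → J → M → ℂ) (t : I → K → N → ℝ) (v : K → J → N → ℝ)
    (lam : I → N → M → ℝ) (k : K) (j : J) (n : N) : ℝ :=
  v k j n * Real.sqrt
    ((∑ i, ∑ m, t i k n * lam i n m * ‖y i j m‖ ^ 2 / (fmEta t v lam i j m) ^ 2) /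
     (∑ i, ∑ m, t i k n * lam i n m / fmEta t v lam i j m))

/-!
Majorization–minimization. Fix a time frame and write the model as `σ = W h`. Rescaling the
activations to `h * s` changes the cost by at most a function that is separable in `s`: the term
`y / σ` is convex in `σ` and is majorized by Cauchy–Schwarz, the term `log σ` is concave and is
majorized by its tangent. The majorant vanishes at `s = 1`, and its `q`-th summand
`h q * (A q * ((s q)⁻¹ - 1) + B q * (s q - 1))` is minimized at `s q = √(A q / B q)`, which is the
factor of the multiplicative update.
-/

section Majorization

variable {ι : Type*} {u : Finset ι}

section OrderedField

variable {𝕜 : Type*} [Field 𝕜] [LinearOrder 𝕜] [IsStrictOrderedRing 𝕜] {a s : ι → 𝕜}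

theorem sq_sum_le_sum_mul_inv_mul_sum_mul (ha : ∀ i ∈ u, 0 ≤ a i) (hs : ∀ i ∈ u, 0 < s i) :
    (∑ i ∈ u, a i) ^ 2 ≤ (∑ i ∈ u, a i * (s i)⁻¹) * ∑ i ∈ u, a i * s i := by
  refine Finset.sum_sq_le_sum_mul_sum_of_sq_le_mul u
    (fun i hi => mul_nonneg (ha i hi) (inv_nonneg.2 (hs i hi).le))
    (fun i hi => mul_nonneg (ha i hi) (hs i hi).le) fun i hi => le_of_eq ?_
  have : s i ≠ 0 := (hs i hi).ne'
  field_simp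

theorem sum_mul_pos_of_sum_pos (ha : ∀ i ∈ u, 0 ≤ a i) (hs : ∀ i ∈ u, 0 < s i)
    (hsum : 0 < ∑ i ∈ u, a i) : 0 < ∑ i ∈ u, a i * s i := by
  obtain ⟨i, hi, hai⟩ : ∃ i ∈ u, 0 < a i := (Finset.sum_pos_iff_of_nonneg ha).1 hsum
  exact Finset.sum_pos' (fun k hk => mul_nonneg (ha k hk) (hs k hk).le)
    ⟨i, hi, mul_pos hai (hs i hi)⟩

theorem div_sum_mul_le {y : 𝕜} (hy : 0 ≤ y) (ha : ∀ i ∈ u, 0 ≤ a i) (hs : ∀ i ∈ u, 0 < s i)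
    (hsum : 0 < ∑ i ∈ u, a i) :
    y / ∑ i ∈ u, a i * s i ≤ y / (∑ i ∈ u, a i) ^ 2 * ∑ i ∈ u, a i * (s i)⁻¹ := by
  rw [div_mul_eq_mul_div, div_le_div_iff₀ (sum_mul_pos_of_sum_pos ha hs hsum) (pow_pos hsum 2),
    mul_assoc]
  exact mul_le_mul_of_nonneg_left (sq_sum_le_sum_mul_inv_mul_sum_mul ha hs) hy

end OrderedField

theorem log_le_log_add_div_sub_one {x z : ℝ} (hx : 0 < x) (hz : 0 < z) :
    Real.log z ≤ Real.log x + (z / x - 1) := by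
  have := Real.log_le_sub_one_of_pos (div_pos hz hx)
  rw [Real.log_div hz.ne' hx.ne'] at this
  linarith

theorem div_add_log_sum_mul_le {a s : ι → ℝ} {y : ℝ} (hy : 0 ≤ y)
    (ha : ∀ i ∈ u, 0 ≤ a i) (hs : ∀ i ∈ u, 0 < s i) (hsum : 0 < ∑ i ∈ u, a i) :
    y / ∑ i ∈ u, a i * s i + Real.log (∑ i ∈ u, a i * s i) ≤
      y / ∑ i ∈ u, a i + Real.log (∑ i ∈ u, a i) +
        ∑ i ∈ u, a i * (y / (∑ i ∈ u, a i) ^ 2 * ((s i)⁻¹ - 1) +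
          (∑ i ∈ u, a i)⁻¹ * (s i - 1)) := by
  have h_div := div_sum_mul_le hy ha hs hsum
  have h_log := log_le_log_add_div_sub_one hsum (sum_mul_pos_of_sum_pos ha hs hsum)
  set σ := ∑ i ∈ u, a i with hσ
  have h_majorant : ∑ i ∈ u, a i * (y / σ ^ 2 * ((s i)⁻¹ - 1) + σ⁻¹ * (s i - 1)) =
      (y / σ ^ 2 * ∑ i ∈ u, a i * (s i)⁻¹ - y / σ) + ((∑ i ∈ u, a i * s i) / σ - 1) :=
    calc
      _ = y / σ ^ 2 * ∑ i ∈ u, a i * (s i)⁻¹ - y / σ ^ 2 * σ +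
          (σ⁻¹ * ∑ i ∈ u, a i * s i - σ⁻¹ * σ) := by
        simp only [hσ, Finset.mul_sum, ← Finset.sum_sub_distrib, ← Finset.sum_add_distrib]
        exact Finset.sum_congr rfl fun i _ => by ring
      _ = _ := by field_simp
  linarith

end Majorization

theorem mul_inv_sqrt_sub_one_add_mul_sqrt_sub_one_nonpos {A B : ℝ} (hA : 0 < A) (hB : 0 < B) :
    A * ((√(A / B))⁻¹ - 1) + B * (√(A / B) - 1) ≤ 0 := by
  have hs : 0 < √(A / B) := Real.sqrt_pos.2 (div_pos hA hB)
  have hAB : A = √(A / B) ^ 2 * B := by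
    rw [Real.sq_sqrt (div_pos hA hB).le, div_mul_cancel₀ A hB.ne']
  set s := √(A / B)
  calc
    A * (s⁻¹ - 1) + B * (s - 1) = -(B * (s - 1) ^ 2) := by
      rw [hAB]
      field_simp
      ring
    _ ≤ 0 := neg_nonpos.2 (by positivity)

open Matrix

section GaussianModel

variable {P Q : Type*}

/-- The negative log-likelihood, up to an additive constant, of independent centred complex
Gaussians with observed powers `y p` and variances `σ p`. -/
noncomputable def gaussianNLL [Fintype P] (y σ : P → ℝ) : ℝ :=
  ∑ p, (y p / σ p + Real.log (σ p))

/-- The term subtracted in `∂ gaussianNLL y (W *ᵥ h) / ∂ h q`; it comes from `y / σ`. -/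
noncomputable def nllGradNeg [Fintype P] [Fintype Q] (W : Matrix P Q ℝ) (y : P → ℝ) (h : Q → ℝ)
    (q : Q) : ℝ :=
  ∑ p, W p q * y p / (W *ᵥ h) p ^ 2

/-- The term added in `∂ gaussianNLL y (W *ᵥ h) / ∂ h q`; it comes from `log σ`. -/
noncomputable def nllGradPos [Fintype P] [Fintype Q] (W : Matrix P Q ℝ) (h : Q → ℝ)
    (q : Q) : ℝ :=
  ∑ p, W p q / (W *ᵥ h) p

/-- The factor by which the majorization–minimization update for `gaussianNLL y (W *ᵥ h)`
multiplies the activation `h q`. -/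
noncomputable def mmFactor [Fintype P] [Fintype Q] (W : Matrix P Q ℝ) (y : P → ℝ) (h : Q → ℝ)
    (q : Q) : ℝ :=
  √(nllGradNeg W y h q / nllGradPos W h q)

variable [Fintype Q] {W : Matrix P Q ℝ} {y : P → ℝ} {h : Q → ℝ}

theorem mulVec_pos_of_exists_pos {p : P} (hW : ∀ q, 0 ≤ W p q) (hh : ∀ q, 0 < h q)
    (hp : ∃ q, 0 < W p q) : 0 < (W *ᵥ h) p := by
  obtain ⟨q, hq⟩ := hp
  exact Finset.sum_pos' (fun q _ => mul_nonneg (hW q) (hh q).le)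
    ⟨q, Finset.mem_univ q, mul_pos hq (hh q)⟩

variable [Fintype P]

theorem nllGradNeg_pos {q : Q} (hW : ∀ p, 0 ≤ W p q) (hy : ∀ p, 0 ≤ y p)
    (hσ : ∀ p, 0 < (W *ᵥ h) p) (hq : ∃ p, 0 < W p q ∧ 0 < y p) : 0 < nllGradNeg W y h q := by
  obtain ⟨p, hWp, hyp⟩ := hq
  exact Finset.sum_pos' (fun p _ => div_nonneg (mul_nonneg (hW p) (hy p)) (sq_nonneg _))
    ⟨p, Finset.mem_univ p, div_pos (mul_pos hWp hyp) (pow_pos (hσ p) 2)⟩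

theorem nllGradPos_pos {q : Q} (hW : ∀ p, 0 ≤ W p q) (hσ : ∀ p, 0 < (W *ᵥ h) p)
    (hq : ∃ p, 0 < W p q) : 0 < nllGradPos W h q := by
  obtain ⟨p, hWp⟩ := hq
  exact Finset.sum_pos' (fun p _ => div_nonneg (hW p) (hσ p).le)
    ⟨p, Finset.mem_univ p, div_pos hWp (hσ p)⟩

theorem mmFactor_pos {q : Q} (hW : ∀ p, 0 ≤ W p q) (hy : ∀ p, 0 ≤ y p)
    (hσ : ∀ p, 0 < (W *ᵥ h) p) (hq : ∃ p, 0 < W p q ∧ 0 < y p) : 0 < mmFactor W y h q :=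
  Real.sqrt_pos.2 <| div_pos (nllGradNeg_pos hW hy hσ hq)
    (nllGradPos_pos hW hσ (hq.imp fun _ => And.left))

theorem gaussianNLL_mulVec_mul_le {s : Q → ℝ} (hW : ∀ p q, 0 ≤ W p q) (hy : ∀ p, 0 ≤ y p)
    (hh : ∀ q, 0 ≤ h q) (hσ : ∀ p, 0 < (W *ᵥ h) p) (hs : ∀ q, 0 < s q) :
    gaussianNLL y (W *ᵥ (h * s)) ≤ gaussianNLL y (W *ᵥ h) +
      ∑ q, h q * (nllGradNeg W y h q * ((s q)⁻¹ - 1) + nllGradPos W h q * (s q - 1)) := by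
  have h_term (p : P) : y p / (W *ᵥ (h * s)) p + Real.log ((W *ᵥ (h * s)) p) ≤
      y p / (W *ᵥ h) p + Real.log ((W *ᵥ h) p) +
        ∑ q, W p q * h q * (y p / (W *ᵥ h) p ^ 2 * ((s q)⁻¹ - 1) +
          ((W *ᵥ h) p)⁻¹ * (s q - 1)) := by
    have h_scaled : (W *ᵥ (h * s)) p = ∑ q, W p q * h q * s q :=
      Finset.sum_congr rfl fun q _ => (mul_assoc _ _ _).symm
    rw [h_scaled]
    exact div_add_log_sum_mul_le (hy p) (fun q _ => mul_nonneg (hW p q) (hh q))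
      (fun q _ => hs q) (hσ p)
  refine (Finset.sum_le_sum fun p _ => h_term p).trans_eq ?_
  rw [Finset.sum_add_distrib, Finset.sum_comm]
  refine congrArg (gaussianNLL y (W *ᵥ h) + ·) (Finset.sum_congr rfl fun q _ => ?_)
  simp only [nllGradNeg, nllGradPos, Finset.sum_mul, ← Finset.sum_add_distrib, Finset.mul_sum]
  exact Finset.sum_congr rfl fun p _ => by ring

theorem gaussianNLL_mulVec_mul_mmFactor_le (hW : ∀ p q, 0 ≤ W p q) (hy : ∀ p, 0 ≤ y p)
    (hh : ∀ q, 0 ≤ h q) (hσ : ∀ p, 0 < (W *ᵥ h) p) (hWy : ∀ q, ∃ p, 0 < W p q ∧ 0 < y p) :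
    gaussianNLL y (W *ᵥ (h * mmFactor W y h)) ≤ gaussianNLL y (W *ᵥ h) := by
  have h_majorant := gaussianNLL_mulVec_mul_le hW hy hh hσ
    fun q => mmFactor_pos (hW · q) hy hσ (hWy q)
  refine h_majorant.trans (add_le_of_nonpos_right (Finset.sum_nonpos fun q _ => ?_))
  exact mul_nonpos_of_nonneg_of_nonpos (hh q) <|
    mul_inv_sqrt_sub_one_add_mul_sqrt_sub_one_nonpos (nllGradNeg_pos (hW · q) hy hσ (hWy q))
      (nllGradPos_pos (hW · q) hσ ((hWy q).imp fun _ => And.left))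

end GaussianModel

section FastMNMF

variable {I J M K N : Type*}

/-- The matrix of the model, the same for every time frame, with the frequency–channel pairs as
rows and the basis–source pairs as columns. -/
def fmWeight (t : I → K → N → ℝ) (lam : I → N → M → ℝ) : Matrix (I × M) (K × N) ℝ :=
  fun p q => t p.1 q.1 q.2 * lam p.1 q.2 p.2

/-- The observed powers `|y i j m|²` in the time frame `j`. -/
noncomputable def fmPower (y : I → J → M → ℂ) (j : J) : I × M → ℝ :=
  fun p => ‖y p.1 j p.2‖ ^ 2

/-- The temporal activations in the time frame `j`. -/
def fmActivation (v : K → J → N → ℝ) (j : J) : K × N → ℝ :=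
  fun q => v q.1 j q.2

variable [Fintype K] [Fintype N] {y : I → J → M → ℂ} {t : I → K → N → ℝ}
  {v : K → J → N → ℝ} {lam : I → N → M → ℝ}

theorem fmEta_eq_fmWeight_mulVec (i : I) (j : J) (m : M) :
    fmEta t v lam i j m = (fmWeight t lam *ᵥ fmActivation v j) (i, m) := by
  simp only [fmEta, mulVec, dotProduct, fmWeight, fmActivation, Fintype.sum_prod_type,
    mul_right_comm]

variable [Fintype I] [Fintype M]

theorem fmCost_eq_sum_gaussianNLL [Fintype J] :
    fmCost y t v lam =
      ∑ j, gaussianNLL (fmPower y j) (fmWeight t lam *ᵥ fmActivation v j) := by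
  simp only [fmCost, gaussianNLL, fmPower, Fintype.sum_prod_type, fmEta_eq_fmWeight_mulVec]
  exact Finset.sum_comm

theorem fmActivation_fmVUpdate (j : J) :
    fmActivation (fmVUpdate y t v lam) j =
      fmActivation v j * mmFactor (fmWeight t lam) (fmPower y j) (fmActivation v j) := by
  funext q
  simp only [fmActivation, fmVUpdate, fmEta_eq_fmWeight_mulVec, Pi.mul_apply, mmFactor, nllGradNeg,
    nllGradPos, fmPower, fmWeight, Fintype.sum_prod_type]

theorem fmVUpdate_pos_and_cost_nonincreasing_general [Fintype J]
    (ht : ∀ i k n, 0 ≤ t i k n) (hv : ∀ k j n, 0 < v k j n) (hlam : ∀ i n m, 0 ≤ lam i n m)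
    (htlam : ∀ i m, ∃ k n, 0 < t i k n * lam i n m)
    (hy : ∀ k j n, ∃ i m, 0 < t i k n * lam i n m ∧ y i j m ≠ 0) :
    (∀ k j n, 0 < fmVUpdate y t v lam k j n) ∧
      fmCost y t (fmVUpdate y t v lam) lam ≤ fmCost y t v lam := by
  have hW (p : I × M) (q : K × N) : 0 ≤ fmWeight t lam p q := mul_nonneg (ht _ _ _) (hlam _ _ _)
  have hpower (j : J) (p : I × M) : 0 ≤ fmPower y j p := sq_nonneg _
  have hσ (j : J) (p : I × M) : 0 < (fmWeight t lam *ᵥ fmActivation v j) p :=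
    mulVec_pos_of_exists_pos (hW p) (fun _ => hv _ _ _) (Prod.exists.2 (htlam p.1 p.2))
  have hsupport (j : J) (q : K × N) : ∃ p, 0 < fmWeight t lam p q ∧ 0 < fmPower y j p := by
    obtain ⟨i, m, hWq, hyq⟩ := hy q.1 j q.2
    exact ⟨(i, m), hWq, pow_pos (norm_pos_iff.2 hyq) 2⟩
  constructor
  · intro k j n
    change 0 < fmActivation (fmVUpdate y t v lam) j (k, n)
    rw [fmActivation_fmVUpdate]
    exact mul_pos (hv k j n) (mmFactor_pos (hW · _) (hpower j) (hσ j) (hsupport j _))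
  · simp only [fmCost_eq_sum_gaussianNLL, fmActivation_fmVUpdate]
    exact Finset.sum_le_sum fun j _ => gaussianNLL_mulVec_mul_mmFactor_le hW (hpower j)
      (fun _ => (hv _ _ _).le) (hσ j) (hsupport j)

end FastMNMF

/-- the multiplicative MM update of the temporal activations `v` preserves strict
positivity and does not increase the FastMNMF cost. -/
theorem fmVUpdate_pos_and_cost_nonincreasing
    {I J M K N : Type*}
    [Fintype I] [Fintype J] [Fintype M] [Fintype K] [Fintype N]
    [Nonempty I] [Nonempty J] [Nonempty M] [Nonempty K] [Nonempty N]
    (y : I → J → M → ℂ) (hy : ∀ i j m, y i j m ≠ 0)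
    (t : I → K → N → ℝ) (v : K → J → N → ℝ) (lam : I → N → M → ℝ)
    (ht : ∀ i k n, 0 < t i k n) (hv : ∀ k j n, 0 < v k j n)
    (hlam : ∀ i n m, 0 < lam i n m) :
    (∀ k j n, 0 < fmVUpdate y t v lam k j n) ∧
      fmCost y t (fmVUpdate y t v lam) lam ≤ fmCost y t v lam := by
  inhabit I; inhabit M; inhabit K; inhabit N
  exact fmVUpdate_pos_and_cost_nonincreasing_general (fun i k n => (ht i k n).le) hv
    (fun i n m => (hlam i n m).le)
    (fun i m => ⟨default, default, mul_pos (ht _ _ _) (hlam _ _ _)⟩)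
    (fun k j n => ⟨default, default, mul_pos (ht _ _ _) (hlam _ _ _), hy _ _ _⟩)
end

section
/- Let I, J, M, K, N be nonempty finite index sets. Let y_{ijm} ∈ ℂ with y_{ijm} ≠ 0 for all (i,j,m) ∈ I×J×M, and let t_{ikn} > 0, v_{kjn} > 0, λ_{inm} > 0 be strictly positive reals for all relevant indices. Define η_{ijm}(λ) = Σ_{k,n} t_{ikn} v_{kjn} λ_{inm} and the cost f(λ) = Σ_{i,j,m} (|y_{ijm}|² / η_{ijm}(λ) + ln η_{ijm}(λ)). Define the multiplicative update λ'_{inm} = λ_{inm} · sqrt( (Σ_{j,k} t_{ikn} v_{kjn} |y_{ijm}|² η_{ijm}(λ)^{−2}) / (Σ_{j,k} t_{ikn} v_{kjn} η_{ijm}(λ)^{−1}) ) applied simultaneously for all (i,n,m). Then λ'_{inm} > 0 for all (i,n,m) and f(λ') ≤ f(λ). -/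
/-- The multiplicative MM update of the diagonalized spatial covariances `λ`. -/
noncomputable def fmLamUpdate {I J M K N : Type*}
    [Fintype J] [Fintype K] [Fintype N]
    (y : I → J → M → ℂ) (t : I → K → N → ℝ) (v : K → J → N → ℝ)
    (lam : I → N → M → ℝ) (i : I) (n : N) (m : M) : ℝ :=
  lam i n m * Real.sqrt
    ((∑ j, ∑ k, t i k n * v k j n * ‖y i j m‖ ^ 2 / (fmEta t v lam i j m) ^ 2) /
     (∑ j, ∑ k, t i k n * v k j n / fmEta t v lam i j m))

/-!
For fixed `i` and `m` the problem is Itakura-Saito regression: with `a j n = ∑ k, t i k n * v k j n`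
and `Y j = |y i j m|²`, decrease `∑ j, (Y j / (a x) j + log ((a x) j))` over positive `x`. Bounding
`1 / (a z) j` by Cauchy-Schwarz and `log ((a z) j)` by its tangent at `(a x) j` gives a majorizer of
the cost at `z` which touches it at `z = x` and is a sum over `n` of terms `p x² / z + q z`. By the
AM-GM inequality such a term is minimal at `z = x √(p / q)`, which is the multiplicative update.
-/

open Matrix

section ItakuraSaito

variable {J N : Type*} [Fintype N] {Y : J → ℝ} {A : Matrix J N ℝ} {x z : N → ℝ}

lemma mulVec_sq_le_mulVec_sq_div_mul_mulVec {j : J} (hA : ∀ n, 0 ≤ A j n) (hz : ∀ n, 0 < z n) :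
    (A *ᵥ x) j ^ 2 ≤ (A *ᵥ fun n ↦ x n ^ 2 / z n) j * (A *ᵥ z) j := by
  refine Finset.sum_sq_le_sum_mul_sum_of_sq_le_mul _ (fun n _ ↦ ?_) (fun n _ ↦ ?_)
    fun n _ ↦ le_of_eq ?_
  · exact mul_nonneg (hA n) (div_nonneg (sq_nonneg _) (hz n).le)
  · exact mul_nonneg (hA n) (hz n).le
  · have := (hz n).ne'
    field_simp

lemma mulVec_pos_of_mulVec_pos {j : J} (hA : ∀ n, 0 ≤ A j n) (hx : 0 < (A *ᵥ x) j)
    (hz : ∀ n, 0 < z n) : 0 < (A *ᵥ z) j := by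
  have hprod : 0 < (A *ᵥ fun n ↦ x n ^ 2 / z n) j * (A *ᵥ z) j :=
    (pow_pos hx 2).trans_le (mulVec_sq_le_mulVec_sq_div_mul_mulVec hA hz)
  exact (Finset.sum_nonneg fun n _ ↦ mul_nonneg (hA n) (hz n).le).lt_of_ne'
    (right_ne_zero_of_mul hprod.ne')

lemma log_le_log_add_div_sub_one_s14 {a b : ℝ} (ha : 0 < a) (hb : 0 < b) :
    Real.log b ≤ Real.log a + b / a - 1 := by
  have := Real.log_le_sub_one_of_pos (div_pos hb ha)
  rw [Real.log_div hb.ne' ha.ne'] at this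
  linarith

lemma mul_sq_div_add_mul_le {p q x z : ℝ} (hp : 0 < p) (hq : 0 < q) (hz : 0 < z) :
    p * (x ^ 2 / (x * √(p / q))) + q * (x * √(p / q)) ≤ p * (x ^ 2 / z) + q * z := by
  have hu : 0 < √(p / q) := Real.sqrt_pos.mpr (div_pos hp hq)
  have hpu : p = q * √(p / q) ^ 2 := by
    rw [Real.sq_sqrt (div_pos hp hq).le, mul_div_cancel₀ _ hq.ne']
  generalize √(p / q) = u at hu hpu
  subst hpu
  have hgap : q * u ^ 2 * (x ^ 2 / z) + q * z
      - (q * u ^ 2 * (x ^ 2 / (x * u)) + q * (x * u)) = q * (x * u - z) ^ 2 / z := by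
    field_simp
    ring
  have : 0 ≤ q * (x * u - z) ^ 2 / z := by positivity
  linarith

variable [Fintype J]

/-- The Itakura-Saito divergence of `A *ᵥ x` from the data `Y`, up to terms depending only on `Y`;
it is the Gaussian negative log-likelihood of variances `A *ᵥ x` given the power spectrum `Y`. -/
noncomputable def itakuraSaitoCost (Y : J → ℝ) (A : Matrix J N ℝ) (x : N → ℝ) : ℝ :=
  ∑ j, (Y j / (A *ᵥ x) j + Real.log ((A *ᵥ x) j))

/-- The negative part of the gradient of `itakuraSaitoCost Y A` at `x`, as a nonnegative vector:
the gradient is `itakuraSaitoGradPos A x - itakuraSaitoGradNeg Y A x`. -/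
noncomputable def itakuraSaitoGradNeg (Y : J → ℝ) (A : Matrix J N ℝ) (x : N → ℝ) : N → ℝ :=
  (fun j ↦ Y j / (A *ᵥ x) j ^ 2) ᵥ* A

/-- The positive part of the gradient of `itakuraSaitoCost Y A` at `x`; it does not depend on the
data `Y`. -/
noncomputable def itakuraSaitoGradPos (A : Matrix J N ℝ) (x : N → ℝ) : N → ℝ :=
  (fun j ↦ ((A *ᵥ x) j)⁻¹) ᵥ* A

/-- The multiplicative majorization-minimization update for `itakuraSaitoCost`. -/
noncomputable def itakuraSaitoUpdate (Y : J → ℝ) (A : Matrix J N ℝ) (x : N → ℝ) (n : N) : ℝ :=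
  x n * √(itakuraSaitoGradNeg Y A x n / itakuraSaitoGradPos A x n)

/-- The majorizer of `itakuraSaitoCost Y A z` built at the current point `x`: Cauchy-Schwarz for the
quotient, the tangent line for the logarithm. -/
noncomputable def itakuraSaitoSurrogate (Y : J → ℝ) (A : Matrix J N ℝ) (x z : N → ℝ) : ℝ :=
  ∑ j, (Y j / (A *ᵥ x) j ^ 2 * (A *ᵥ fun n ↦ x n ^ 2 / z n) j
    + (Real.log ((A *ᵥ x) j) + (A *ᵥ z) j / (A *ᵥ x) j - 1))

lemma itakuraSaitoCost_le_surrogate (hY : ∀ j, 0 ≤ Y j) (hA : ∀ j n, 0 ≤ A j n)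
    (hAx : ∀ j, 0 < (A *ᵥ x) j) (hz : ∀ n, 0 < z n) :
    itakuraSaitoCost Y A z ≤ itakuraSaitoSurrogate Y A x z := by
  refine Finset.sum_le_sum fun j _ ↦ ?_
  have hAz : 0 < (A *ᵥ z) j := mulVec_pos_of_mulVec_pos (hA j) (hAx j) hz
  refine add_le_add ?_ (log_le_log_add_div_sub_one_s14 (hAx j) hAz)
  rw [div_mul_eq_mul_div, div_le_div_iff₀ hAz (pow_pos (hAx j) 2), mul_assoc]
  exact mul_le_mul_of_nonneg_left (mulVec_sq_le_mulVec_sq_div_mul_mulVec (hA j) hz) (hY j)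

lemma itakuraSaitoSurrogate_self (hAx : ∀ j, (A *ᵥ x) j ≠ 0) :
    itakuraSaitoSurrogate Y A x x = itakuraSaitoCost Y A x := by
  have hxx : (fun n ↦ x n ^ 2 / x n) = x := by
    ext n
    rw [sq, mul_self_div_self]
  refine Finset.sum_congr rfl fun j _ ↦ ?_
  have := hAx j
  rw [hxx]
  field_simp
  ring

lemma itakuraSaitoSurrogate_eq_sum :
    itakuraSaitoSurrogate Y A x z =
      ∑ n, (itakuraSaitoGradNeg Y A x n * (x n ^ 2 / z n) + itakuraSaitoGradPos A x n * z n)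
        + ∑ j, (Real.log ((A *ᵥ x) j) - 1) := by
  have hneg : ∑ n, itakuraSaitoGradNeg Y A x n * (x n ^ 2 / z n) =
      ∑ j, Y j / (A *ᵥ x) j ^ 2 * (A *ᵥ fun n ↦ x n ^ 2 / z n) j :=
    (dotProduct_mulVec (fun j ↦ Y j / (A *ᵥ x) j ^ 2) A fun n ↦ x n ^ 2 / z n).symm
  have hpos : ∑ n, itakuraSaitoGradPos A x n * z n = ∑ j, ((A *ᵥ x) j)⁻¹ * (A *ᵥ z) j :=
    (dotProduct_mulVec (fun j ↦ ((A *ᵥ x) j)⁻¹) A z).symm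
  rw [Finset.sum_add_distrib, hneg, hpos, ← Finset.sum_add_distrib, ← Finset.sum_add_distrib]
  exact Finset.sum_congr rfl fun j _ ↦ by ring

lemma itakuraSaitoGradNeg_pos {n : N} (hY : ∀ j, 0 ≤ Y j) (hA : ∀ j, 0 ≤ A j n)
    (hAx : ∀ j, 0 < (A *ᵥ x) j) (hn : ∃ j, 0 < A j n ∧ 0 < Y j) :
    0 < itakuraSaitoGradNeg Y A x n := by
  obtain ⟨j, hAj, hYj⟩ := hn
  exact Finset.sum_pos'
    (fun j _ ↦ mul_nonneg (div_nonneg (hY j) (pow_pos (hAx j) 2).le) (hA j))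
    ⟨j, Finset.mem_univ j, mul_pos (div_pos hYj (pow_pos (hAx j) 2)) hAj⟩

lemma itakuraSaitoGradPos_pos {n : N} (hA : ∀ j, 0 ≤ A j n) (hAx : ∀ j, 0 < (A *ᵥ x) j)
    (hn : ∃ j, 0 < A j n) : 0 < itakuraSaitoGradPos A x n := by
  obtain ⟨j, hAj⟩ := hn
  exact Finset.sum_pos' (fun j _ ↦ mul_nonneg (inv_pos.mpr (hAx j)).le (hA j))
    ⟨j, Finset.mem_univ j, mul_pos (inv_pos.mpr (hAx j)) hAj⟩

lemma itakuraSaitoUpdate_pos {n : N} (hx : 0 < x n) (hneg : 0 < itakuraSaitoGradNeg Y A x n)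
    (hpos : 0 < itakuraSaitoGradPos A x n) : 0 < itakuraSaitoUpdate Y A x n :=
  mul_pos hx (Real.sqrt_pos.mpr (div_pos hneg hpos))

lemma itakuraSaitoSurrogate_update_le (hz : ∀ n, 0 < z n)
    (hneg : ∀ n, 0 < itakuraSaitoGradNeg Y A x n) (hpos : ∀ n, 0 < itakuraSaitoGradPos A x n) :
    itakuraSaitoSurrogate Y A x (itakuraSaitoUpdate Y A x) ≤ itakuraSaitoSurrogate Y A x z := by
  rw [itakuraSaitoSurrogate_eq_sum, itakuraSaitoSurrogate_eq_sum]
  refine add_le_add_left (Finset.sum_le_sum fun n _ ↦ ?_) _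
  exact mul_sq_div_add_mul_le (hneg n) (hpos n) (hz n)

theorem itakuraSaitoUpdate_pos_and_cost_le (hY : ∀ j, 0 ≤ Y j) (hA : ∀ j n, 0 ≤ A j n)
    (hx : ∀ n, 0 < x n) (hAx : ∀ j, 0 < (A *ᵥ x) j) (hn : ∀ n, ∃ j, 0 < A j n ∧ 0 < Y j) :
    (∀ n, 0 < itakuraSaitoUpdate Y A x n) ∧
      itakuraSaitoCost Y A (itakuraSaitoUpdate Y A x) ≤ itakuraSaitoCost Y A x := by
  have hneg n : 0 < itakuraSaitoGradNeg Y A x n :=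
    itakuraSaitoGradNeg_pos hY (hA · n) hAx (hn n)
  have hpos n : 0 < itakuraSaitoGradPos A x n :=
    itakuraSaitoGradPos_pos (hA · n) hAx ((hn n).imp fun _ ↦ And.left)
  have hupdate n : 0 < itakuraSaitoUpdate Y A x n :=
    itakuraSaitoUpdate_pos (hx n) (hneg n) (hpos n)
  refine ⟨hupdate, ?_⟩
  calc itakuraSaitoCost Y A (itakuraSaitoUpdate Y A x)
      ≤ itakuraSaitoSurrogate Y A x (itakuraSaitoUpdate Y A x) :=
        itakuraSaitoCost_le_surrogate hY hA hAx hupdate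
    _ ≤ itakuraSaitoSurrogate Y A x x := itakuraSaitoSurrogate_update_le hx hneg hpos
    _ = itakuraSaitoCost Y A x := itakuraSaitoSurrogate_self fun j ↦ (hAx j).ne'

end ItakuraSaito

section FastMNMF

variable {I J M K N : Type*} [Fintype K]

/-- The power spectral density of source `n` in time frame `j` at frequency `i`; `fmEta` is its
product with the spatial covariances. -/
def fmSourcePSD (t : I → K → N → ℝ) (v : K → J → N → ℝ) (i : I) : Matrix J N ℝ :=
  Matrix.of fun j n ↦ ∑ k, t i k n * v k j n

variable [Fintype N] {y : I → J → M → ℂ} {t : I → K → N → ℝ} {v : K → J → N → ℝ}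
  {lam : I → N → M → ℝ}

lemma fmEta_pos [Nonempty K] [Nonempty N] (ht : ∀ i k n, 0 < t i k n) (hv : ∀ k j n, 0 < v k j n)
    (hlam : ∀ i n m, 0 < lam i n m) (i : I) (j : J) (m : M) : 0 < fmEta t v lam i j m :=
  Finset.sum_pos (fun k _ ↦ Finset.sum_pos
    (fun n _ ↦ mul_pos (mul_pos (ht i k n) (hv k j n)) (hlam i n m))
    Finset.univ_nonempty) Finset.univ_nonempty

variable (y t v lam)

lemma fmEta_eq_mulVec (i : I) (j : J) (m : M) :
    fmEta t v lam i j m = (fmSourcePSD t v i *ᵥ (lam i · m)) j := by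
  simp only [fmEta, fmSourcePSD, mulVec, dotProduct, of_apply, Finset.sum_mul]
  exact Finset.sum_comm

variable [Fintype J]

lemma fmLamUpdate_eq_itakuraSaitoUpdate (i : I) (n : N) (m : M) :
    fmLamUpdate y t v lam i n m =
      itakuraSaitoUpdate (fun j ↦ ‖y i j m‖ ^ 2) (fmSourcePSD t v i) (lam i · m) n := by
  have hneg : ∑ j, ∑ k, t i k n * v k j n * ‖y i j m‖ ^ 2 / fmEta t v lam i j m ^ 2 =
      itakuraSaitoGradNeg (fun j ↦ ‖y i j m‖ ^ 2) (fmSourcePSD t v i) (lam i · m) n := by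
    refine Finset.sum_congr rfl fun j _ ↦ ?_
    rw [← Finset.sum_div, ← Finset.sum_mul, fmEta_eq_mulVec, mul_div_assoc, mul_comm]
    rfl
  have hpos : ∑ j, ∑ k, t i k n * v k j n / fmEta t v lam i j m =
      itakuraSaitoGradPos (fmSourcePSD t v i) (lam i · m) n := by
    refine Finset.sum_congr rfl fun j _ ↦ ?_
    rw [← Finset.sum_div, fmEta_eq_mulVec, div_eq_inv_mul]
    rfl
  rw [fmLamUpdate, hneg, hpos, itakuraSaitoUpdate]

lemma fmCost_eq_sum_itakuraSaitoCost [Fintype I] [Fintype M] :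
    fmCost y t v lam =
      ∑ i, ∑ m, itakuraSaitoCost (fun j ↦ ‖y i j m‖ ^ 2) (fmSourcePSD t v i) (lam i · m) := by
  simp only [fmCost, fmEta_eq_mulVec, itakuraSaitoCost]
  exact Finset.sum_congr rfl fun i _ ↦ Finset.sum_comm

variable {y t v lam}

theorem fmLamUpdate_pos_and_cost_nonincreasing_general [Fintype I] [Fintype M]
    (ht : ∀ i k n, 0 ≤ t i k n) (hv : ∀ k j n, 0 ≤ v k j n) (hlam : ∀ i n m, 0 < lam i n m)
    (heta : ∀ i j m, 0 < fmEta t v lam i j m)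
    (hactive : ∀ i n m, ∃ j k, 0 < t i k n * v k j n ∧ y i j m ≠ 0) :
    (∀ i n m, 0 < fmLamUpdate y t v lam i n m) ∧
      fmCost y t v (fmLamUpdate y t v lam) ≤ fmCost y t v lam := by
  have hPSD i j n : 0 ≤ fmSourcePSD t v i j n :=
    Finset.sum_nonneg fun k _ ↦ mul_nonneg (ht i k n) (hv k j n)
  have hPSD_active i m n : ∃ j, 0 < fmSourcePSD t v i j n ∧ 0 < ‖y i j m‖ ^ 2 := by
    obtain ⟨j, k, htv, hy⟩ := hactive i n m
    refine ⟨j, ?_, pow_pos (norm_pos_iff.mpr hy) 2⟩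
    exact Finset.sum_pos' (fun k _ ↦ mul_nonneg (ht i k n) (hv k j n)) ⟨k, Finset.mem_univ k, htv⟩
  have hdescent i m := itakuraSaitoUpdate_pos_and_cost_le (fun j ↦ sq_nonneg ‖y i j m‖) (hPSD i)
    (hlam i · m) (fun j ↦ fmEta_eq_mulVec t v lam i j m ▸ heta i j m) (hPSD_active i m)
  simp only [fmCost_eq_sum_itakuraSaitoCost, fmLamUpdate_eq_itakuraSaitoUpdate]
  exact ⟨fun i n m ↦ (hdescent i m).1 n,
    Finset.sum_le_sum fun i _ ↦ Finset.sum_le_sum fun m _ ↦ (hdescent i m).2⟩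

end FastMNMF

/-- the multiplicative MM update of the diagonalized spatial covariance entries
`λ` preserves strict positivity and does not increase the FastMNMF cost. -/
theorem fmLamUpdate_pos_and_cost_nonincreasing
    {I J M K N : Type*}
    [Fintype I] [Fintype J] [Fintype M] [Fintype K] [Fintype N]
    [Nonempty I] [Nonempty J] [Nonempty M] [Nonempty K] [Nonempty N]
    (y : I → J → M → ℂ) (hy : ∀ i j m, y i j m ≠ 0)
    (t : I → K → N → ℝ) (v : K → J → N → ℝ) (lam : I → N → M → ℝ)
    (ht : ∀ i k n, 0 < t i k n) (hv : ∀ k j n, 0 < v k j n)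
    (hlam : ∀ i n m, 0 < lam i n m) :
    (∀ i n m, 0 < fmLamUpdate y t v lam i n m) ∧
      fmCost y t v (fmLamUpdate y t v lam) ≤ fmCost y t v lam := by
  exact fmLamUpdate_pos_and_cost_nonincreasing_general (fun i k n ↦ (ht i k n).le)
    (fun k j n ↦ (hv k j n).le) hlam (fmEta_pos ht hv hlam) fun i n m ↦
      ⟨Classical.arbitrary J, Classical.arbitrary K, mul_pos (ht _ _ _) (hv _ _ _), hy _ _ _⟩
end
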